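/- Assume 1 < Y < 8/5 and fix ζ > 1. As h → 0 with ε = ε(h) satisfying ε(h)·h^{−4/(8+Y)} → ∞ and ε(h)·h^{−1/(4−Y)} → 0, one has Cov( X_h²·1_{|X_h| ≤ ε}, X_h²·1_{|X_h| ≤ ζε} ) = 2σ⁴h² + ((C₊+C₋)/(4−Y))·h·ε^{4−Y} + o(h·ε^{4−Y}). -/

import Mathlib

open MeasureTheory ProbabilityTheory Filter Asymptotics Set
open scoped Topology NNReal ENNReal Real

noncomputable section

/-- The Lévy density `s(x) = (C₊·1_{x>0} + C₋·1_{x<0})·q(x)·|x|^{−1−Y}`. -/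
def levyDensity (Y Cp Cm : ℝ) (q : ℝ → ℝ) (x : ℝ) : ℝ :=
  (if 0 < x then Cp else if x < 0 then Cm else 0) * q x * |x| ^ (-1 - Y)

/-- The Lévy measure `ν(dx) = s(x) dx`. -/
def levyMeasure (Y Cp Cm : ℝ) (q : ℝ → ℝ) : Measure ℝ :=
  volume.withDensity fun x => ENNReal.ofReal (levyDensity Y Cp Cm q x)

/-- The Lévy exponent `ψ_J(u) = ibu + ∫ (e^{iux} − 1 − iux·1_{|x|≤1}) ν(dx)`. -/
def psiJ (b Y Cp Cm : ℝ) (q : ℝ → ℝ) (u : ℝ) : ℂ :=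
  Complex.I * b * u +
    ∫ x : ℝ,
      (Complex.exp (Complex.I * u * x) - 1 - (if |x| ≤ 1 then Complex.I * u * x else 0))
      ∂(levyMeasure Y Cp Cm q)

/-- The scale parameter `ς = ((C₊+C₋)Γ(−Y)|cos(πY/2)|)^{1/Y}`. -/
def varsigma (Y Cp Cm : ℝ) : ℝ :=
  ((Cp + Cm) * Real.Gamma (-Y) * |Real.cos (π * Y / 2)|) ^ (1 / Y)

/-- The stable part of the Lévy exponent:
`ς^Y |u|^Y (1 − iβ·sgn(u)·tan(πY/2))` with `β = (C₊−C₋)/(C₊+C₋)`. -/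
def stablePart (Y Cp Cm : ℝ) (u : ℝ) : ℂ :=
  (varsigma Y Cp Cm ^ Y * |u| ^ Y : ℝ) *
    (1 - Complex.I * ((Cp - Cm) / (Cp + Cm)) * Real.sign u * Real.tan (π * Y / 2))

/-- Characteristic function of `X̃_h`, the time-`h` marginal of a Brownian motion with
variance `σ²` plus an independent strictly `Y`-stable process. -/
def tildeCF (σ Y Cp Cm : ℝ) (h u : ℝ) : ℂ :=
  Complex.exp (-(σ ^ 2 * u ^ 2 * h / 2) - h * stablePart Y Cp Cm u)


lemma spectral_rep (f : ℝ → ℝ) (hf : ContDiff ℝ (⊤ : ℕ∞) f) (hc : HasCompactSupport f) :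
    ∃ G : ℝ → ℂ, Continuous G ∧ Integrable (fun u : ℝ => (1 + u ^ 2) ^ 2 * ‖G u‖) ∧
      ∀ x : ℝ, ((f x : ℝ) : ℂ) = ∫ u : ℝ, G u * Complex.exp (Complex.I * u * x) := by
  have hfc : ContDiff ℝ (⊤ : ℕ∞) (fun x => (f x : ℂ)) := Complex.ofRealCLM.contDiff.comp hf
  have hcc : HasCompactSupport (fun x => (f x : ℂ)) := hc.comp_left (g := Complex.ofReal) (by simp)
  let g : SchwartzMap ℝ ℂ := hcc.toSchwartzMap hfc
  have hg : ∀ x, g x = (f x : ℂ) := fun x => rfl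
  let gh : SchwartzMap ℝ ℂ := FourierTransform.fourier g
  have hinv : ∀ x : ℝ, g x = ∫ ξ : ℝ, Complex.exp (Complex.I * (2 * π * ξ : ℝ) * x) * gh ξ := by
    intro x
    have h1 : FourierTransformInv.fourierInv (FourierTransform.fourier g) = g := by simp
    conv_lhs => rw [← h1]
    rw [SchwartzMap.fourierInv_coe, Real.fourierInv_eq']
    refine integral_congr_ae (Eventually.of_forall fun ξ => ?_)
    simp only [smul_eq_mul]
    congr 2
    simp
    ring
  have hInt0 : ∀ k : ℕ, Integrable (fun ξ : ℝ => ‖ξ‖ ^ k * ‖gh ξ‖) := fun k =>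
    gh.integrable_pow_mul volume k
  refine ⟨fun u => (1 / (2 * π) : ℝ) * gh (u * (2 * π)⁻¹), ?_, ?_, ?_⟩
  · have := gh.continuous
    fun_prop
  · have h0 : Integrable (fun ξ : ℝ => (1 + (2 * π * ξ) ^ 2) ^ 2 * (1 / (2 * π) * ‖gh ξ‖)) := by
      have h3 : (fun ξ : ℝ => (1 + (2 * π * ξ) ^ 2) ^ 2 * (1 / (2 * π) * ‖gh ξ‖))
        = fun ξ : ℝ => (1 / (2 * π)) * (‖ξ‖ ^ 0 * ‖gh ξ‖)
          + (1 / (2 * π)) * 2 * (2 * π) ^ 2 * (‖ξ‖ ^ 2 * ‖gh ξ‖)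
          + (1 / (2 * π)) * (2 * π) ^ 4 * (‖ξ‖ ^ 4 * ‖gh ξ‖) := by
        funext ξ
        have : ‖ξ‖ ^ 4 = ξ ^ 4 := by rw [Real.norm_eq_abs]; exact Even.pow_abs (by decide) ξ
        rw [this, Real.norm_eq_abs, sq_abs]
        ring
      rw [h3]
      exact (((hInt0 0).const_mul _).add ((hInt0 2).const_mul _)).add ((hInt0 4).const_mul _)
    have h1 := h0.comp_mul_right' (R := (2 * π)⁻¹) (by positivity)
    refine h1.congr (Eventually.of_forall fun u => ?_)
    simp only [norm_mul, Complex.norm_real]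
    have : 2 * π * (u * (2 * π)⁻¹) = u := by field_simp
    rw [this, Real.norm_of_nonneg (by positivity)]
  · intro x
    rw [← hg, hinv]
    have := Measure.integral_comp_mul_right (fun ξ : ℝ => Complex.exp (Complex.I * (2 * π * ξ : ℝ) * x) * gh ξ) (2 * π)⁻¹
    rw [inv_inv, abs_of_pos (by positivity)] at this
    have h2 : ∫ ξ : ℝ, Complex.exp (Complex.I * (2 * π * ξ : ℝ) * x) * gh ξ
       = (2 * π)⁻¹ • ∫ u : ℝ, Complex.exp (Complex.I * (2 * π * (u * (2 * π)⁻¹) : ℝ) * x) * gh (u * (2 * π)⁻¹) := by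
      rw [this, smul_smul, inv_mul_cancel₀ (by positivity), one_smul]
    rw [h2, ← integral_smul]
    refine integral_congr_ae (Eventually.of_forall fun u => ?_)
    have h4 : 2 * π * (u * (2 * π)⁻¹) = u := by field_simp
    simp only [h4, Complex.real_smul, one_div]
    ring

lemma spectral_deriv {f : ℝ → ℝ} {G : ℝ → ℂ} (hG : Continuous G)
    (hi : Integrable (fun u : ℝ => (1 + u ^ 2) ^ 2 * ‖G u‖))
    (hr : ∀ x : ℝ, ((f x : ℝ) : ℂ) = ∫ u : ℝ, G u * Complex.exp (Complex.I * u * x))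
    (hd : HasDerivAt f 0 0) : ∫ u : ℝ, G u * (Complex.I * u) = 0 := by
  have hb1 : Integrable G := by
    refine hi.mono' hG.aestronglyMeasurable (Eventually.of_forall fun u => ?_)
    have : (1:ℝ) ≤ (1 + u ^ 2) ^ 2 := by nlinarith [sq_nonneg u, sq_nonneg (u^2)]
    nlinarith [norm_nonneg (G u)]
  have key := hasDerivAt_integral_of_dominated_loc_of_deriv_le (μ := volume) (𝕜 := ℝ)
    (F := fun (x : ℝ) (u : ℝ) => G u * Complex.exp (Complex.I * u * x))
    (F' := fun (x : ℝ) (u : ℝ) => G u * (Complex.exp (Complex.I * u * x) * (Complex.I * u)))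
    (x₀ := (0 : ℝ)) (s := univ) (bound := fun u => (1 + u ^ 2) ^ 2 * ‖G u‖) univ_mem
    (Eventually.of_forall fun x => (by fun_prop : Continuous _).aestronglyMeasurable)
    (by simpa using hb1) (by fun_prop : Continuous _).aestronglyMeasurable
    (Eventually.of_forall fun u x _ => by
      have e1 : ‖Complex.exp (Complex.I * u * x)‖ = 1 := by
        rw [show Complex.I * u * x = ((u * x : ℝ) : ℂ) * Complex.I by push_cast; ring]
        exact Complex.norm_exp_ofReal_mul_I _
      simp only [norm_mul, e1, Complex.norm_I, Complex.norm_real, one_mul, Real.norm_eq_abs]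
      have : |u| ≤ (1 + u ^ 2) ^ 2 := by
        rw [← sq_abs u]; nlinarith [sq_nonneg (|u|-1), abs_nonneg u, sq_nonneg (|u|^2)]
      rw [mul_comm]
      exact mul_le_mul_of_nonneg_right this (norm_nonneg _))
    hi
    (Eventually.of_forall fun u x _ => by
      have h1 : HasDerivAt (fun x : ℝ => Complex.I * u * (x : ℂ)) (Complex.I * u) x := by
        simpa using (Complex.ofRealCLM.hasDerivAt (x := x)).const_mul (Complex.I * (u : ℂ))
      exact (h1.cexp).const_mul (G u))
  have h2 := key.2
  have h3 : HasDerivAt (fun x => ((f x : ℝ) : ℂ)) ((0 : ℝ) : ℂ) 0 := hd.ofReal_comp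
  have h4 : (fun x => ((f x : ℝ) : ℂ)) = fun x : ℝ => ∫ u : ℝ, G u * Complex.exp (Complex.I * u * x) := funext hr
  rw [h4] at h3
  have := h2.unique h3
  simpa using this

lemma spectral_integral {f : ℝ → ℝ} {G : ℝ → ℂ} (hG : Integrable G) (hGc : Continuous G)
    (hr : ∀ x : ℝ, ((f x : ℝ) : ℂ) = ∫ u : ℝ, G u * Complex.exp (Complex.I * u * x))
    (μ : Measure ℝ) [IsProbabilityMeasure μ] :
    ((∫ x, f x ∂μ : ℝ) : ℂ) = ∫ u : ℝ, G u * charFun μ u := by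
  rw [← integral_complex_ofReal]
  simp_rw [hr]
  rw [integral_integral_swap]
  · refine integral_congr_ae (Eventually.of_forall fun u => ?_)
    simp only
    rw [integral_const_mul, charFun_apply_real]
    congr 1
    refine integral_congr_ae (Eventually.of_forall fun x => ?_)
    simp only
    congr 1
    ring
  · have h1 : Integrable (fun p : ℝ × ℝ => ‖G p.2‖) (μ.prod volume) := by
      simpa using (integrable_const (1:ℝ) (μ := μ)).mul_prod hG.norm
    refine h1.mono' (by fun_prop : Continuous _).aestronglyMeasurable (Eventually.of_forall fun p => ?_)
    have e1 : ‖Complex.exp (Complex.I * p.2 * p.1)‖ = 1 := by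
      rw [show Complex.I * p.2 * p.1 = ((p.2 * p.1 : ℝ) : ℂ) * Complex.I by push_cast; ring]
      exact Complex.norm_exp_ofReal_mul_I _
    simp [Function.uncurry, e1]
/-- The stable kernel. -/
def kern (Y Cp Cm : ℝ) (z : ℝ) : ℝ :=
  (if 0 < z then Cp else if z < 0 then Cm else 0) * |z| ^ (-1 - Y)

lemma kern_measurable (Y Cp Cm : ℝ) : Measurable (kern Y Cp Cm) := by
  unfold kern
  refine Measurable.mul ?_ (by fun_prop)
  exact Measurable.ite measurableSet_Ioi measurable_const
    (Measurable.ite measurableSet_Iio measurable_const measurable_const)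

lemma kern_nonneg {Y Cp Cm : ℝ} (hCp : 0 < Cp) (hCm : 0 < Cm) (z : ℝ) : 0 ≤ kern Y Cp Cm z := by
  unfold kern
  refine mul_nonneg ?_ (Real.rpow_nonneg (abs_nonneg _) _)
  split_ifs <;> linarith

lemma levyDensity_eq (Y Cp Cm : ℝ) (q : ℝ → ℝ) (x : ℝ) :
    levyDensity Y Cp Cm q x = kern Y Cp Cm x * q x := by
  unfold levyDensity kern; ring

lemma kern_scale (Y Cp Cm : ℝ) {e : ℝ} (he : 0 < e) (z : ℝ) :
    kern Y Cp Cm (e * z) = e ^ (-1 - Y) * kern Y Cp Cm z := by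
  unfold kern
  rw [abs_mul, abs_of_pos he, Real.mul_rpow he.le (abs_nonneg _)]
  have h1 : (0 < e * z) = (0 < z) := by simp [he]
  have h2 : (e * z < 0) = (z < 0) := by
    rw [mul_neg_iff]; simp [he, not_lt.mpr he.le]
  simp only [h1, h2]
  ring

lemma kern_even {Y Cp Cm : ℝ} {F : ℝ → ℝ} (hF : ∀ x, F (-x) = F x)
    (hi : IntegrableOn (fun t => F t * t ^ (-1 - Y)) (Ioi 0)) :
    Integrable (fun z => F z * kern Y Cp Cm z) ∧
      ∫ z, F z * kern Y Cp Cm z = (Cp + Cm) * ∫ t in Ioi 0, F t * t ^ (-1 - Y) := by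
  have e1 : EqOn (fun z => Cp * (F z * z ^ (-1 - Y))) (fun z => F z * kern Y Cp Cm z) (Ioi 0) := by
    intro z hz
    have hz' : 0 < z := hz
    simp only [kern, hz', if_true, abs_of_pos hz']
    ring
  have e2 : EqOn (fun z => Cm * (F (-z) * (-z) ^ (-1 - Y))) (fun z => F z * kern Y Cp Cm z) (Iio 0) := by
    intro z hz
    have hz' : z < 0 := hz
    simp only [kern, hz', if_true, abs_of_neg hz', not_lt.mpr hz'.le, if_false, hF]
    ring
  have i1 : IntegrableOn (fun z => F z * kern Y Cp Cm z) (Ioi 0) :=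
    IntegrableOn.congr_fun (hi.const_mul Cp) e1 measurableSet_Ioi
  have hneg : IntegrableOn (fun z => F (-z) * (-z) ^ (-1 - Y)) (Iio 0) := by
    have h0 : IntegrableOn (fun t => F t * t ^ (-1 - Y)) (Ioi (-0)) := by simpa using hi
    exact h0.comp_neg_Iio
  have i2 : IntegrableOn (fun z => F z * kern Y Cp Cm z) (Iio 0) :=
    IntegrableOn.congr_fun (hneg.const_mul Cm) e2 measurableSet_Iio
  have i2' := (integrableOn_Iic_iff_integrableOn_Iio).mpr i2
  refine ⟨?_, ?_⟩
  · rw [← integrableOn_univ, ← Iic_union_Ioi (a := (0:ℝ))]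
    exact i2'.union i1
  · rw [← intervalIntegral.integral_Iic_add_Ioi i2' i1, integral_Iic_eq_integral_Iio,
      ← setIntegral_congr_fun measurableSet_Ioi e1, ← setIntegral_congr_fun measurableSet_Iio e2,
      integral_const_mul, integral_const_mul, ← integral_Iic_eq_integral_Iio]
    have := integral_comp_neg_Iic (0:ℝ) (fun t => F t * t ^ (-1 - Y))
    rw [neg_zero] at this
    rw [this]
    ring

lemma kern_trunc {Y Cp Cm : ℝ} (hY2 : Y < 2) {m : ℕ} (hm : 2 ≤ m) (hme : Even m)
    {a : ℝ} (ha : 0 < a) :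
    Integrable (fun z => (indicator {x : ℝ | |x| ≤ a} (fun x => x ^ m) z) * kern Y Cp Cm z) ∧
      ∫ z, (indicator {x : ℝ | |x| ≤ a} (fun x => x ^ m) z) * kern Y Cp Cm z
        = (Cp + Cm) / (m - Y) * a ^ ((m : ℝ) - Y) := by
  have hm' : (2:ℝ) ≤ m := by exact_mod_cast hm
  have e1 : EqOn (indicator (Ioc 0 a) (fun t : ℝ => t ^ ((m:ℝ) - 1 - Y)))
      (fun t => (indicator {x : ℝ | |x| ≤ a} (fun x => x ^ m) t) * t ^ (-1 - Y)) (Ioi 0) := by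
    intro t ht
    have ht' : 0 < t := ht
    by_cases h : t ≤ a
    · have h1 : t ∈ Ioc 0 a := ⟨ht', h⟩
      have h2 : t ∈ {x : ℝ | |x| ≤ a} := by simpa [abs_of_pos ht'] using h
      simp only [indicator_of_mem h1, indicator_of_mem h2]
      rw [← Real.rpow_natCast, ← Real.rpow_add ht']
      congr 1; ring
    · have h1 : t ∉ Ioc 0 a := fun hh => h hh.2
      have h2 : t ∉ {x : ℝ | |x| ≤ a} := by simpa [abs_of_pos ht'] using h
      simp only [indicator_of_notMem h1, indicator_of_notMem h2, zero_mul]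
  have i0 : IntegrableOn (fun t : ℝ => t ^ ((m:ℝ) - 1 - Y)) (Ioc 0 a) := by
    have := intervalIntegral.intervalIntegrable_rpow' (a := 0) (b := a) (r := (m:ℝ) - 1 - Y) (by linarith)
    rwa [intervalIntegrable_iff_integrableOn_Ioc_of_le ha.le] at this
  have i1 : IntegrableOn (indicator (Ioc 0 a) (fun t : ℝ => t ^ ((m:ℝ) - 1 - Y))) (Ioi 0) :=
    ((integrable_indicator_iff measurableSet_Ioc).mpr i0).integrableOn
  have := kern_even (Y := Y) (Cp := Cp) (Cm := Cm)
    (F := indicator {x : ℝ | |x| ≤ a} (fun x => x ^ m)) (fun x => by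
      simp [indicator_apply, hme.neg_pow]) (i1.congr_fun e1 measurableSet_Ioi)
  refine ⟨this.1, ?_⟩
  rw [this.2, ← setIntegral_congr_fun measurableSet_Ioi e1, setIntegral_indicator measurableSet_Ioc]
  have hs : Ioi (0:ℝ) ∩ Ioc 0 a = Ioc 0 a := by
    ext x; simp only [mem_inter_iff, mem_Ioi, mem_Ioc]; tauto
  rw [hs, ← intervalIntegral.integral_of_le ha.le, integral_rpow (Or.inl (by linarith))]
  have h3 : (m:ℝ) - 1 - Y + 1 = m - Y := by ring
  have h4 : (m:ℝ) - Y ≠ 0 := by linarith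
  rw [h3, Real.zero_rpow h4]
  field_simp
  ring

lemma kern_min {Y Cp Cm : ℝ} (hY1 : 1 < Y) (hY2 : Y < 2) :
    Integrable (fun z => min (z ^ 2) |z| * kern Y Cp Cm z) := by
  refine (kern_even (F := fun z => min (z ^ 2) |z|) (fun x => by simp) ?_).1
  rw [← Ioc_union_Ioi_eq_Ioi (zero_le_one' ℝ)]
  refine IntegrableOn.union ?_ ?_
  · have := intervalIntegral.intervalIntegrable_rpow' (a := 0) (b := 1) (r := 1 - Y) (by linarith)
    rw [intervalIntegrable_iff_integrableOn_Ioc_of_le zero_le_one] at this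
    refine this.congr_fun (fun t ht => ?_) measurableSet_Ioc
    have ht0 : 0 < t := ht.1
    have h1 : min (t ^ 2) |t| = t ^ 2 := by
      rw [abs_of_pos ht0]; apply min_eq_left; nlinarith [ht.2]
    simp only [h1]
    rw [← Real.rpow_natCast, ← Real.rpow_add ht0]
    congr 1; push_cast; ring
  · have := integrableOn_Ioi_rpow_of_lt (a := -Y) (c := 1) (by linarith) one_pos
    refine this.congr_fun (fun t ht => ?_) measurableSet_Ioi
    have ht1 : 1 < t := ht
    have ht0 : 0 < t := by linarith
    have h1 : min (t ^ 2) |t| = t := by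
      rw [abs_of_pos ht0]; apply min_eq_right; nlinarith
    simp only [h1]
    nth_rewrite 2 [← Real.rpow_one t]
    rw [← Real.rpow_add ht0]
    congr 1; ring

lemma psi_scale {b Y Cp Cm : ℝ} {q : ℝ → ℝ} (hCp : 0 < Cp) (hCm : 0 < Cm)
    (hq_meas : Measurable q) (hq_nonneg : ∀ x, 0 ≤ q x) {e : ℝ} (he : 0 < e) (u : ℝ) :
    psiJ b Y Cp Cm q (u / e) = Complex.I * b * (u / e) + (e ^ (-Y) : ℝ) *
      ∫ z : ℝ, ((kern Y Cp Cm z * q (e * z) : ℝ) : ℂ) *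
        (Complex.exp (Complex.I * u * z) - 1 - (if |e * z| ≤ 1 then Complex.I * u * z else 0)) := by
  unfold psiJ levyMeasure
  have hmeas : Measurable (fun x => ENNReal.ofReal (levyDensity Y Cp Cm q x)) := by
    simp_rw [levyDensity_eq]
    exact ((kern_measurable Y Cp Cm).mul hq_meas).ennreal_ofReal
  rw [integral_withDensity_eq_integral_toReal_smul hmeas (Eventually.of_forall fun x => ENNReal.ofReal_lt_top)]
  push_cast
  congr 1
  have h1 := Measure.integral_comp_mul_left (fun x : ℝ => (ENNReal.ofReal (levyDensity Y Cp Cm q x)).toReal •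
      (Complex.exp (Complex.I * (u / e) * x) - 1 - (if |x| ≤ 1 then Complex.I * (u / e) * x else 0))) e
  rw [abs_of_pos (inv_pos.mpr he)] at h1
  have h2 := congrArg (fun w : ℂ => e • w) h1
  simp only [smul_smul, mul_inv_cancel₀ he.ne', one_smul] at h2
  rw [← h2, ← integral_smul, ← integral_const_mul]
  refine integral_congr_ae (Eventually.of_forall fun z => ?_)
  have hec : (e : ℂ) ≠ 0 := by exact_mod_cast he.ne'
  have h3 : Complex.I * (u / e) * ((e * z : ℝ) : ℂ) = Complex.I * u * z := by
    push_cast; field_simp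
  simp only [h3]
  rw [levyDensity_eq, ENNReal.toReal_ofReal (mul_nonneg (kern_nonneg hCp hCm _) (hq_nonneg _)),
    kern_scale _ _ _ he, smul_smul, Complex.real_smul]
  have h4 : e ^ (-Y) = e * e ^ (-1 - Y) := by
    nth_rewrite 2 [← Real.rpow_one e]
    rw [← Real.rpow_add he]; congr 1; ring
  rw [h4]
  push_cast
  ring

lemma comp_bound {e : ℝ} (he : 0 < e) (he1 : e ≤ 1) (u z : ℝ) :
    ‖Complex.exp (Complex.I * u * z) - 1 - (if |e * z| ≤ 1 then Complex.I * u * z else 0)‖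
      ≤ 4 * (1 + u ^ 2) * min (z ^ 2) |z| := by
  have hn : ‖Complex.I * (u:ℂ) * (z:ℂ)‖ = |u| * |z| := by simp
  have e0 : ‖Complex.exp (Complex.I * u * z)‖ = 1 := by
    rw [show Complex.I * u * z = ((u * z : ℝ) : ℂ) * Complex.I by push_cast; ring]
    exact Complex.norm_exp_ofReal_mul_I _
  have hu := abs_nonneg u
  have hz := abs_nonneg z
  rcases le_or_gt |z| 1 with h | h
  · have h1 : |e * z| ≤ 1 := by
      rw [abs_mul, abs_of_pos he]; nlinarith
    have h2 : min (z ^ 2) |z| = |z| ^ 2 := by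
      rw [← sq_abs]; apply min_eq_left; nlinarith
    rw [if_pos h1, h2]
    rcases le_or_gt (|u| * |z|) 1 with h3 | h3
    · have := Complex.norm_exp_sub_one_sub_id_le (x := Complex.I * u * z) (by rw [hn]; exact h3)
      rw [hn] at this
      rw [← sq_abs u]
      nlinarith [mul_nonneg (sq_nonneg |u|) (sq_nonneg |z|), sq_nonneg |z|]
    · have : ‖Complex.exp (Complex.I * u * z) - 1 - Complex.I * u * z‖ ≤ 1 + 1 + |u| * |z| := by
        refine (norm_sub_le _ _).trans (add_le_add ((norm_sub_le _ _).trans ?_) hn.le)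
        rw [e0]; simp
      rw [← sq_abs u]
      nlinarith [sq_nonneg |z|]
  · have h2 : min (z ^ 2) |z| = |z| := by
      rw [← sq_abs]; apply min_eq_right; nlinarith
    rw [h2]
    have : ‖Complex.exp (Complex.I * u * z) - 1 - (if |e * z| ≤ 1 then Complex.I * u * z else 0)‖ ≤ 1 + 1 + |u| * |z| := by
      refine (norm_sub_le _ _).trans (add_le_add ((norm_sub_le _ _).trans ?_) ?_)
      · rw [e0]; simp
      · split_ifs
        · exact hn.le
        · simp; positivity
    refine this.trans ?_
    have h5 : |u| ≤ 1 + u ^ 2 := by rw [← sq_abs u]; nlinarith [sq_nonneg (|u| - 1)]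
    nlinarith [sq_nonneg u, mul_nonneg (sq_nonneg u) hz]
lemma fubini_kern {Y Cp Cm M : ℝ} {q : ℝ → ℝ} (hY1 : 1 < Y) (hY2 : Y < 2)
    (hCp : 0 < Cp) (hCm : 0 < Cm)
    (hq_meas : Measurable q) (hq_nonneg : ∀ x, 0 ≤ q x) (hM : ∀ x, q x ≤ M)
    {f : ℝ → ℝ} {G : ℝ → ℂ} (hG : Continuous G)
    (hi : Integrable (fun u : ℝ => (1 + u ^ 2) ^ 2 * ‖G u‖))
    (hr : ∀ x : ℝ, ((f x : ℝ) : ℂ) = ∫ u : ℝ, G u * Complex.exp (Complex.I * u * x))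
    (hf0 : f 0 = 0) (hd : HasDerivAt f 0 0) {e : ℝ} (he : 0 < e) (he1 : e ≤ 1) :
    Integrable (fun u : ℝ => G u * ∫ z : ℝ, ((kern Y Cp Cm z * q (e * z) : ℝ) : ℂ) *
        (Complex.exp (Complex.I * u * z) - 1 - (if |e * z| ≤ 1 then Complex.I * u * z else 0))) ∧
    ∫ u : ℝ, (G u * ∫ z : ℝ, ((kern Y Cp Cm z * q (e * z) : ℝ) : ℂ) *
        (Complex.exp (Complex.I * u * z) - 1 - (if |e * z| ≤ 1 then Complex.I * u * z else 0)))
      = ((∫ z : ℝ, f z * (kern Y Cp Cm z * q (e * z)) : ℝ) : ℂ) := by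
  have hM0 : 0 ≤ M := (hq_nonneg 0).trans (hM 0)
  have hGi : ∀ (c : ℝ → ℂ), Continuous c → (∀ u, ‖c u‖ ≤ (1 + u ^ 2) ^ 2) → Integrable (fun u => G u * c u) := by
    intro c hc hb
    refine hi.mono' (by fun_prop : Continuous _).aestronglyMeasurable (Eventually.of_forall fun u => ?_)
    rw [norm_mul, mul_comm]
    exact mul_le_mul_of_nonneg_right (hb u) (norm_nonneg _)
  have hprod : Integrable (Function.uncurry fun (u z : ℝ) => G u * (((kern Y Cp Cm z * q (e * z) : ℝ) : ℂ) *
        (Complex.exp (Complex.I * u * z) - 1 - (if |e * z| ≤ 1 then Complex.I * u * z else 0))))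
      (volume.prod volume) := by
    have h1 := hi.mul_prod ((kern_min (Cp := Cp) (Cm := Cm) hY1 hY2).const_mul (4 * M))
    refine h1.mono' ?_ (Eventually.of_forall fun p => ?_)
    · have hk := kern_measurable Y Cp Cm
      apply Measurable.aestronglyMeasurable
      have hGm := hG.measurable
      simp only [Function.uncurry_def]
      have hite : Measurable (fun p : ℝ × ℝ => if |e * p.2| ≤ 1 then Complex.I * (p.1 : ℂ) * (p.2 : ℂ) else 0) := by
        refine Measurable.ite ?_ (by fun_prop) measurable_const
        exact measurableSet_le (by fun_prop) measurable_const
      fun_prop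
    · simp only [Function.uncurry_def, norm_mul, Complex.norm_real]
      have hb := comp_bound he he1 p.1 p.2
      have hk := kern_nonneg (Y := Y) hCp hCm p.2
      rw [Real.norm_of_nonneg hk, Real.norm_of_nonneg (hq_nonneg _)]
      have hm0 : 0 ≤ min (p.2 ^ 2) |p.2| := le_min (sq_nonneg _) (abs_nonneg _)
      have h5 : 1 + p.1 ^ 2 ≤ (1 + p.1 ^ 2) ^ 2 := by nlinarith [sq_nonneg p.1]
      calc ‖G p.1‖ * (kern Y Cp Cm p.2 * q (e * p.2) * _)
          ≤ ‖G p.1‖ * (kern Y Cp Cm p.2 * M * (4 * (1 + p.1 ^ 2) * min (p.2 ^ 2) |p.2|)) := by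
            have := hM (e * p.2)
            have := hq_nonneg (e * p.2)
            gcongr
        _ ≤ ‖G p.1‖ * (kern Y Cp Cm p.2 * M * (4 * (1 + p.1 ^ 2) ^ 2 * min (p.2 ^ 2) |p.2|)) := by
            gcongr
        _ = _ := by ring
  have heq : ∀ u : ℝ, G u * ∫ z : ℝ, ((kern Y Cp Cm z * q (e * z) : ℝ) : ℂ) *
        (Complex.exp (Complex.I * u * z) - 1 - (if |e * z| ≤ 1 then Complex.I * u * z else 0)) =
      ∫ z : ℝ, G u * (((kern Y Cp Cm z * q (e * z) : ℝ) : ℂ) *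
        (Complex.exp (Complex.I * u * z) - 1 - (if |e * z| ≤ 1 then Complex.I * u * z else 0))) :=
    fun u => (integral_const_mul _ _).symm
  simp_rw [heq]
  refine ⟨hprod.integral_prod_left, ?_⟩
  rw [integral_integral_swap hprod, ← integral_complex_ofReal]
  refine integral_congr_ae (Eventually.of_forall fun z => ?_)
  simp only
  have hz : ∀ u : ℝ, G u * (((kern Y Cp Cm z * q (e * z) : ℝ) : ℂ) *
        (Complex.exp (Complex.I * u * z) - 1 - (if |e * z| ≤ 1 then Complex.I * u * z else 0))) =
      ((kern Y Cp Cm z * q (e * z) : ℝ) : ℂ) * (G u * Complex.exp (Complex.I * u * z) - G u * 1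
        - (if |e * z| ≤ 1 then (z : ℂ) else 0) * (G u * (Complex.I * u))) := by
    intro u; split_ifs <;> ring
  simp_rw [hz]
  have i1 : Integrable (fun u : ℝ => G u * Complex.exp (Complex.I * u * z)) := by
    refine hGi _ (by fun_prop) fun u => ?_
    rw [show Complex.I * u * z = ((u * z : ℝ) : ℂ) * Complex.I by push_cast; ring,
      Complex.norm_exp_ofReal_mul_I]
    nlinarith [sq_nonneg u, sq_nonneg (u ^ 2)]
  have i2 : Integrable (fun u : ℝ => G u * 1) := by
    refine hGi _ (by fun_prop) fun u => ?_
    rw [norm_one]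
    nlinarith [sq_nonneg u, sq_nonneg (u ^ 2)]
  have i3 : Integrable (fun u : ℝ => G u * (Complex.I * u)) := by
    refine hGi _ (by fun_prop) fun u => ?_
    simp only [norm_mul, Complex.norm_I, Complex.norm_real, one_mul, Real.norm_eq_abs]
    rw [← sq_abs u]; nlinarith [sq_nonneg (|u|-1), abs_nonneg u, sq_nonneg (|u|^2)]
  have h0 := hr 0
  simp only [hf0, Complex.ofReal_zero, mul_zero, Complex.exp_zero] at h0
  have i12 : Integrable (fun u : ℝ => G u * Complex.exp (Complex.I * u * z) - G u * 1) := i1.sub i2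
  rw [integral_const_mul, integral_sub i12 (i3.const_mul _), integral_sub i1 i2,
    integral_const_mul, spectral_deriv hG hi hr hd, ← h0, ← hr z]
  push_cast
  ring

lemma exp_bound {w : ℂ} (hw : ‖Complex.exp w‖ ≤ 1) : ‖Complex.exp w - 1 - w‖ ≤ 3 * ‖w‖ ^ 2 := by
  rcases le_or_gt ‖w‖ 1 with h | h
  · have := Complex.norm_exp_sub_one_sub_id_le h
    nlinarith [sq_nonneg ‖w‖]
  · have : ‖Complex.exp w - 1 - w‖ ≤ 1 + 1 + ‖w‖ := by
      refine (norm_sub_le _ _).trans (add_le_add ((norm_sub_le _ _).trans ?_) le_rfl)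
      rw [norm_one]; linarith
    nlinarith

lemma core {Y Cp Cm M σ b : ℝ} {q : ℝ → ℝ} (hY1 : 1 < Y) (hY2 : Y < 2)
    (hCp : 0 < Cp) (hCm : 0 < Cm)
    (hq_meas : Measurable q) (hq_nonneg : ∀ x, 0 ≤ q x) (hM : ∀ x, q x ≤ M)
    {f : ℝ → ℝ} (hf : ContDiff ℝ (⊤ : ℕ∞) f) (hc : HasCompactSupport f)
    (hf0 : f 0 = 0) (hd : HasDerivAt f 0 0) :
    ∃ C : ℝ, ∀ h e : ℝ, 0 < h → 0 < e → e ≤ 1 → ∀ (μ γ : Measure ℝ), IsProbabilityMeasure μ →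
      IsProbabilityMeasure γ →
      (∀ u : ℝ, ‖Complex.exp (h * psiJ b Y Cp Cm q (u / e))‖ ≤ 1) →
      (∀ u : ℝ, charFun γ u = (Real.exp (-(σ ^ 2 * (h / e ^ 2) * u ^ 2 / 2)) : ℝ)) →
      (∀ u : ℝ, charFun μ u = charFun γ u * Complex.exp (h * psiJ b Y Cp Cm q (u / e))) →
      |∫ x, f x ∂μ - ∫ x, f x ∂γ - (h * e ^ (-Y)) * ∫ z : ℝ, f z * (kern Y Cp Cm z * q (e * z))|
        ≤ C * ((h * e ^ (-Y)) * (h * e ^ (-Y) + h / e ^ 2)) := by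
  obtain ⟨G, hG, hi, hr⟩ := spectral_rep f hf hc
  have hM0 : 0 ≤ M := (hq_nonneg 0).trans (hM 0)
  have hGi : ∀ (c : ℝ → ℂ), Continuous c → (∀ u, ‖c u‖ ≤ (1 + u ^ 2) ^ 2) → Integrable (fun u => G u * c u) := by
    intro c hc hb
    refine hi.mono' (by fun_prop : Continuous _).aestronglyMeasurable (Eventually.of_forall fun u => ?_)
    rw [norm_mul, mul_comm]
    exact mul_le_mul_of_nonneg_right (hb u) (norm_nonneg _)
  have hGint : Integrable G := by
    have : Integrable (fun u : ℝ => G u * 1) := by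
      refine hGi _ (by fun_prop) fun u => ?_
      rw [norm_one]
      nlinarith [sq_nonneg u, sq_nonneg (u ^ 2)]
    simpa using this
  have hGint1 : Integrable (fun u : ℝ => G u * (Complex.I * u)) := by
    refine hGi _ (by fun_prop) fun u => ?_
    simp only [norm_mul, Complex.norm_I, Complex.norm_real, one_mul, Real.norm_eq_abs]
    rw [← sq_abs u]; nlinarith [sq_nonneg (|u|-1), abs_nonneg u, sq_nonneg (|u|^2)]
  set D := ∫ z, min (z ^ 2) |z| * kern Y Cp Cm z with hD
  have hD0 : 0 ≤ D := integral_nonneg fun z =>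
    mul_nonneg (le_min (sq_nonneg _) (abs_nonneg _)) (kern_nonneg hCp hCm z)
  set K := |b| + 4 * M * D with hK
  have hK0 : 0 ≤ K := by positivity
  refine ⟨(3 * K ^ 2 + σ ^ 2 * K) * ∫ u : ℝ, (1 + u ^ 2) ^ 2 * ‖G u‖, ?_⟩
  intro h e hh he he1 μ γ hμ hγ hpsi hcγ hcμ
  set τ := h * e ^ (-Y) with hτ
  set δ := h / e ^ 2 with hδ
  have hτ0 : 0 < τ := by positivity
  have hδ0 : 0 < δ := by positivity
  set I1 : ℝ → ℂ := fun u => ∫ z : ℝ, ((kern Y Cp Cm z * q (e * z) : ℝ) : ℂ) *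
        (Complex.exp (Complex.I * u * z) - 1 - (if |e * z| ≤ 1 then Complex.I * u * z else 0)) with hI1
  set w : ℝ → ℂ := fun u => h * psiJ b Y Cp Cm q (u / e) with hw
  have hweq : ∀ u, w u = (h * b / e : ℝ) * (Complex.I * u) + (τ : ℂ) * I1 u := by
    intro u
    simp only [hw, psi_scale hCp hCm hq_meas hq_nonneg he u, hτ, hI1]
    push_cast
    ring
  have hI1b : ∀ u, ‖I1 u‖ ≤ 4 * M * D * (1 + u ^ 2) := by
    intro u
    have h1 : ‖I1 u‖ ≤ ∫ z, (4 * M * (1 + u ^ 2)) * (min (z ^ 2) |z| * kern Y Cp Cm z) := by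
      refine norm_integral_le_of_norm_le ((kern_min hY1 hY2).const_mul _) (Eventually.of_forall fun z => ?_)
      have hb := comp_bound he he1 u z
      have hk := kern_nonneg (Y := Y) hCp hCm z
      have hm0 : 0 ≤ min (z ^ 2) |z| := le_min (sq_nonneg _) (abs_nonneg _)
      have h1 := hM (e * z)
      have h2 := hq_nonneg (e * z)
      rw [norm_mul, Complex.norm_real, Real.norm_of_nonneg (mul_nonneg hk h2)]
      calc _ ≤ (kern Y Cp Cm z * M) * (4 * (1 + u ^ 2) * min (z ^ 2) |z|) := by gcongr
        _ = _ := by ring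
    rw [integral_const_mul, ← hD] at h1
    linarith
  have hhe : h / e ≤ τ := by
    rw [hτ, div_eq_mul_inv, ← Real.rpow_neg_one]
    exact mul_le_mul_of_nonneg_left (Real.rpow_le_rpow_of_exponent_ge he he1 (by linarith)) hh.le
  have hwb : ∀ u, ‖w u‖ ≤ τ * K * (1 + u ^ 2) := by
    intro u
    rw [hweq]
    refine (norm_add_le _ _).trans ?_
    simp only [norm_mul, Complex.norm_I, Complex.norm_real, one_mul, Real.norm_eq_abs]
    rw [abs_of_pos hτ0, show h * b / e = (h / e) * b by ring, abs_mul, abs_of_pos (by positivity : 0 < h / e)]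
    have h1 : |u| ≤ 1 + u ^ 2 := by rw [← sq_abs u]; nlinarith [sq_nonneg (|u| - 1)]
    calc h / e * |b| * |u| + τ * ‖I1 u‖ ≤ τ * |b| * (1 + u ^ 2) + τ * (4 * M * D * (1 + u ^ 2)) := by
          gcongr
          exact hI1b u
      _ = _ := by rw [hK]; ring
  obtain ⟨hF1, hF2⟩ := fubini_kern hY1 hY2 hCp hCm hq_meas hq_nonneg hM hG hi hr hf0 hd he he1
  have hGw : ∀ u, G u * w u = (h * b / e : ℝ) * (G u * (Complex.I * u)) + (τ : ℂ) * (G u * I1 u) := by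
    intro u; rw [hweq]; ring
  have hGwi : Integrable (fun u => G u * w u) := by
    simp_rw [hGw]
    exact (hGint1.const_mul _).add (hF1.const_mul _)
  have hGwv : ∫ u, G u * w u = (τ : ℂ) * ((∫ z : ℝ, f z * (kern Y Cp Cm z * q (e * z)) : ℝ) : ℂ) := by
    simp_rw [hGw]
    rw [integral_add (hGint1.const_mul _) (hF1.const_mul _), integral_const_mul, integral_const_mul,
      spectral_deriv hG hi hr hd, hF2]
    simp
  have hch : ∀ (ρ : Measure ℝ), IsProbabilityMeasure ρ → Integrable (fun u => G u * charFun ρ u) := by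
    intro ρ hρ
    refine hGint.norm.mono' (hG.aestronglyMeasurable.mul (measurable_charFun).aestronglyMeasurable)
      (Eventually.of_forall fun u => ?_)
    rw [norm_mul]
    exact mul_le_of_le_one_right (norm_nonneg _) (norm_charFun_le_one u)
  have hmain : ((∫ x, f x ∂μ - ∫ x, f x ∂γ - τ * ∫ z : ℝ, f z * (kern Y Cp Cm z * q (e * z)) : ℝ) : ℂ)
      = ∫ u, (G u * charFun μ u - G u * charFun γ u - G u * w u) := by
    have i12 : Integrable (fun u : ℝ => G u * charFun μ u - G u * charFun γ u) :=
      (hch μ hμ).sub (hch γ hγ)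
    rw [integral_sub i12 hGwi, integral_sub (hch μ hμ) (hch γ hγ), hGwv,
      ← spectral_integral hGint hG hr μ, ← spectral_integral hGint hG hr γ]
    push_cast
    ring
  rw [← Real.norm_eq_abs, ← Complex.norm_real, hmain, mul_right_comm, ← integral_const_mul]
  refine norm_integral_le_of_norm_le (hi.const_mul _) (Eventually.of_forall fun u => ?_)
  set E := Real.exp (-(σ ^ 2 * δ * u ^ 2 / 2)) with hE
  have hy0 : 0 ≤ σ ^ 2 * δ * u ^ 2 / 2 := by positivity
  have hE1 : E ≤ 1 := Real.exp_le_one_iff.mpr (by linarith)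
  have hE0 : 0 < E := Real.exp_pos _
  have hE2 : 1 - E ≤ σ ^ 2 * δ * u ^ 2 / 2 := by
    have := Real.add_one_le_exp (-(σ ^ 2 * δ * u ^ 2 / 2))
    rw [← hE] at this; linarith
  have hform : G u * charFun μ u - G u * charFun γ u - G u * w u
      = G u * ((E : ℂ) * (Complex.exp (w u) - 1 - w u) + ((E - 1 : ℝ) : ℂ) * w u) := by
    rw [hcμ, hcγ, ← hE]
    change G u * ((E : ℂ) * Complex.exp (w u)) - G u * (E : ℂ) - G u * w u = _
    push_cast
    ring
  rw [hform, norm_mul]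
  have hb1 := exp_bound (hpsi u)
  have hu1 : 0 < 1 + u ^ 2 := by positivity
  have hwu := hwb u
  have hw0 := norm_nonneg (w u)
  have hfin : ‖(E : ℂ) * (Complex.exp (w u) - 1 - w u) + ((E - 1 : ℝ) : ℂ) * w u‖
      ≤ 3 * (τ * K * (1 + u ^ 2)) ^ 2 + (σ ^ 2 * δ * u ^ 2 / 2) * (τ * K * (1 + u ^ 2)) := by
    refine (norm_add_le _ _).trans (add_le_add ?_ ?_)
    · rw [norm_mul, Complex.norm_real, Real.norm_of_nonneg hE0.le]
      calc _ ≤ 1 * (3 * ‖w u‖ ^ 2) := by gcongr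
        _ ≤ _ := by rw [one_mul]; gcongr
    · rw [norm_mul, Complex.norm_real, Real.norm_eq_abs, abs_of_nonpos (by linarith)]
      have : -(E - 1) ≤ σ ^ 2 * δ * u ^ 2 / 2 := by linarith
      gcongr
  have hfin2 : 3 * (τ * K * (1 + u ^ 2)) ^ 2 + (σ ^ 2 * δ * u ^ 2 / 2) * (τ * K * (1 + u ^ 2))
      ≤ (3 * K ^ 2 + σ ^ 2 * K) * (τ * (τ + δ)) * (1 + u ^ 2) ^ 2 := by
    have a1 : u ^ 2 / 2 ≤ 1 + u ^ 2 := by nlinarith [sq_nonneg u]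
    generalize 1 + u ^ 2 = U at *
    have a2 : 0 ≤ σ ^ 2 * δ * (τ * K) * U := by positivity
    have a3 := mul_le_mul_of_nonneg_left a1 a2
    have a4 : 0 ≤ K ^ 2 * τ * δ * U ^ 2 := by positivity
    have a5 : 0 ≤ σ ^ 2 * K * τ * τ * U ^ 2 := by positivity
    linarith
  calc _ ≤ ‖G u‖ * ((3 * K ^ 2 + σ ^ 2 * K) * (τ * (τ + δ)) * (1 + u ^ 2) ^ 2) :=
        mul_le_mul_of_nonneg_left (hfin.trans hfin2) (norm_nonneg _)
    _ = _ := by ring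
lemma dct_kern {Y Cp Cm M : ℝ} {q : ℝ → ℝ}
    (hq_meas : Measurable q) (hq_nonneg : ∀ x, 0 ≤ q x) (hM : ∀ x, q x ≤ M)
    (hq_lim : Tendsto q (𝓝[≠] (0 : ℝ)) (𝓝 1))
    {f : ℝ → ℝ} (hfm : Measurable f) (hfi : Integrable (fun z => f z * kern Y Cp Cm z))
    {l : Filter ℝ} [l.IsCountablyGenerated] {ε : ℝ → ℝ} (hε : Tendsto ε l (𝓝[>] 0)) :
    Tendsto (fun h => ∫ z : ℝ, f z * (kern Y Cp Cm z * q (ε h * z))) l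
      (𝓝 (∫ z, f z * kern Y Cp Cm z)) := by
  have hk := kern_measurable Y Cp Cm
  refine tendsto_integral_filter_of_dominated_convergence
    (fun z => M * ‖f z * kern Y Cp Cm z‖) ?_ ?_ (hfi.norm.const_mul M) ?_
  · exact Eventually.of_forall fun h => (by fun_prop : Measurable _).aestronglyMeasurable
  · refine Eventually.of_forall fun h => Eventually.of_forall fun z => ?_
    rw [← mul_assoc, norm_mul, Real.norm_of_nonneg (hq_nonneg _), mul_comm]
    exact mul_le_mul_of_nonneg_right (hM _) (norm_nonneg _)
  · have h0 : ∀ᵐ z : ℝ, z ≠ 0 := by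
      simp [ae_iff]
    filter_upwards [h0] with z hz
    have h1 : Tendsto (fun h => ε h * z) l (𝓝[≠] 0) := by
      rw [tendsto_nhdsWithin_iff] at hε ⊢
      refine ⟨by simpa using hε.1.mul_const z, ?_⟩
      filter_upwards [hε.2] with h hh
      exact mul_ne_zero (ne_of_gt hh) hz
    have h2 := ((hq_lim.comp h1).const_mul (kern Y Cp Cm z)).const_mul (f z)
    simpa using h2

lemma smooth_limit
    {Ω : Type*} [MeasurableSpace Ω] (P : Measure Ω) [IsProbabilityMeasure P]
    {Y Cp Cm M σ b : ℝ} {q : ℝ → ℝ} (hY1 : 1 < Y) (hY2 : Y < 2)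
    (hCp : 0 < Cp) (hCm : 0 < Cm)
    (hq_meas : Measurable q) (hq_nonneg : ∀ x, 0 ≤ q x) (hM : ∀ x, q x ≤ M)
    (hq_lim : Tendsto q (𝓝[≠] (0 : ℝ)) (𝓝 1))
    (J : ℝ → Ω → ℝ) (W : Ω → ℝ)
    (hWmeas : Measurable W) (hW : P.map W = gaussianReal 0 1)
    (hJmeas : ∀ h : ℝ, Measurable (J h))
    (hJcf : ∀ h : ℝ, 0 < h → ∀ u : ℝ,
      ∫ ω, Complex.exp (Complex.I * u * J h ω) ∂P = Complex.exp (h * psiJ b Y Cp Cm q u))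
    (hindep : ∀ h : ℝ, 0 < h → IndepFun W (J h) P)
    (ε : ℝ → ℝ) (hε : Tendsto ε (𝓝[>] (0 : ℝ)) (𝓝[>] 0))
    (hτ : Tendsto (fun h => h * ε h ^ (-Y)) (𝓝[>] (0 : ℝ)) (𝓝 0))
    (hδ : Tendsto (fun h => h / ε h ^ 2) (𝓝[>] (0 : ℝ)) (𝓝 0))
    {f : ℝ → ℝ} (hf : ContDiff ℝ (⊤ : ℕ∞) f) (hc : HasCompactSupport f)
    (hf0 : f 0 = 0) (hd : HasDerivAt f 0 0)
    (hfi : Integrable (fun z => f z * kern Y Cp Cm z)) :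
    Tendsto (fun h => (∫ ω, f ((σ * Real.sqrt h * W ω + J h ω) / ε h) ∂P
        - ∫ ω, f ((σ * Real.sqrt h / ε h) * W ω) ∂P) / (h * ε h ^ (-Y))) (𝓝[>] (0 : ℝ))
      (𝓝 (∫ z, f z * kern Y Cp Cm z)) := by
  obtain ⟨C, hC⟩ := core (σ := σ) (b := b) hY1 hY2 hCp hCm hq_meas hq_nonneg hM hf hc hf0 hd
  have hlim := dct_kern hq_meas hq_nonneg hM hq_lim hf.continuous.measurable hfi hε
  have hε' := tendsto_nhdsWithin_iff.mp hε
  have hfm := hf.continuous.measurable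
  have hbound : ∀ᶠ h in 𝓝[>] (0:ℝ),
      |(∫ ω, f ((σ * Real.sqrt h * W ω + J h ω) / ε h) ∂P
        - ∫ ω, f ((σ * Real.sqrt h / ε h) * W ω) ∂P) / (h * ε h ^ (-Y))
        - ∫ z : ℝ, f z * (kern Y Cp Cm z * q (ε h * z))| ≤ C * (h * ε h ^ (-Y) + h / ε h ^ 2) := by
    filter_upwards [hε'.2, hε'.1.eventually (gt_mem_nhds (show (0:ℝ) < 1 by norm_num)),
      self_mem_nhdsWithin] with h he he1 hh
    have he : 0 < ε h := he
    have hh : 0 < h := hh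
    have hτ0 : 0 < h * ε h ^ (-Y) := by positivity
    set X : Ω → ℝ := fun ω => (σ * Real.sqrt h * W ω + J h ω) / ε h with hX
    set V : Ω → ℝ := fun ω => (σ * Real.sqrt h / ε h) * W ω with hV
    set U : Ω → ℝ := fun ω => (1 / ε h) * J h ω with hU
    have hJm := hJmeas h
    have hXm : Measurable X := by fun_prop
    have hVm : Measurable V := by fun_prop
    have hUm : Measurable U := by fun_prop
    have hpJ : ∀ u, charFun (P.map (J h)) u = Complex.exp (h * psiJ b Y Cp Cm q u) := by
      intro u
      rw [charFun_apply_real, integral_map hJm.aemeasurable (by fun_prop), ← hJcf h hh u]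
      refine integral_congr_ae (Eventually.of_forall fun ω => ?_)
      simp only
      congr 1
      ring
    have hprobJ : IsProbabilityMeasure (P.map (J h)) := Measure.isProbabilityMeasure_map hJm.aemeasurable
    have hpU : ∀ u, charFun (P.map U) u = Complex.exp (h * psiJ b Y Cp Cm q (u / ε h)) := by
      intro u
      rw [hU, charFun_map_mul_comp hJm.aemeasurable, hpJ]
      congr 3
      ring
    have hpV : ∀ u, charFun (P.map V) u
        = (Real.exp (-(σ ^ 2 * (h / ε h ^ 2) * u ^ 2 / 2)) : ℝ) := by
      intro u
      rw [hV, charFun_map_mul_comp hWmeas.aemeasurable, hW, charFun_gaussianReal]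
      rw [Complex.ofReal_exp]
      congr 1
      have h1 : (σ * Real.sqrt h / ε h) ^ 2 = σ ^ 2 * (h / ε h ^ 2) := by
        rw [div_pow, mul_pow, Real.sq_sqrt hh.le]; ring
      rw [← h1]
      push_cast
      ring
    have hXVU : X = fun ω => V ω + U ω := by
      funext ω; simp only [hX, hV, hU]; ring
    have hind : IndepFun V U P :=
      (hindep h hh).comp (φ := fun x => (σ * Real.sqrt h / ε h) * x) (ψ := fun x => (1 / ε h) * x)
        (by fun_prop) (by fun_prop)
    have hpX : ∀ u, charFun (P.map X) u = charFun (P.map V) u * Complex.exp (h * psiJ b Y Cp Cm q (u / ε h)) := by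
      intro u
      rw [hXVU, hind.charFun_map_fun_add_eq_mul hVm.aemeasurable hUm.aemeasurable, Pi.mul_apply, hpU]
    have hmain := hC h (ε h) hh he he1.le (P.map X) (P.map V)
      (Measure.isProbabilityMeasure_map hXm.aemeasurable)
      (Measure.isProbabilityMeasure_map hVm.aemeasurable)
      (fun u => by rw [← hpJ]; exact norm_charFun_le_one _) hpV hpX
    rw [integral_map hXm.aemeasurable hfm.aestronglyMeasurable,
      integral_map hVm.aemeasurable hfm.aestronglyMeasurable] at hmain
    have e1 : (∫ ω, f (X ω) ∂P - ∫ ω, f (V ω) ∂P) / (h * ε h ^ (-Y))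
        - ∫ z : ℝ, f z * (kern Y Cp Cm z * q (ε h * z))
        = (∫ ω, f (X ω) ∂P - ∫ ω, f (V ω) ∂P - (h * ε h ^ (-Y)) *
          ∫ z : ℝ, f z * (kern Y Cp Cm z * q (ε h * z))) / (h * ε h ^ (-Y)) := by
      field_simp
    rw [e1, abs_div, abs_of_pos hτ0, div_le_iff₀ hτ0]
    refine hmain.trans (le_of_eq ?_)
    ring
  have hz : Tendsto (fun h => C * (h * ε h ^ (-Y) + h / ε h ^ 2)) (𝓝[>] (0:ℝ)) (𝓝 0) := by
    simpa using (hτ.add hδ).const_mul C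
  simp only [← Real.norm_eq_abs] at hbound
  have hdiff := squeeze_zero_norm' hbound hz
  have := hdiff.add hlim
  simpa using this

lemma gauss_bump
    {Ω : Type*} [MeasurableSpace Ω] (P : Measure Ω) [IsProbabilityMeasure P]
    (W : Ω → ℝ) (hWmeas : Measurable W) (hW : P.map W = gaussianReal 0 1)
    {m : ℕ} (hm : m ≤ 10) (hme : Even m) (χ : ContDiffBump (0 : ℝ)) (s : ℝ) :
    |∫ ω, (s * W ω) ^ m * χ (s * W ω) ∂P - s ^ m * ∫ ω, W ω ^ m ∂P|
      ≤ s ^ 10 * ((χ.rIn ^ (10 - m))⁻¹ * ∫ ω, W ω ^ 10 ∂P) := by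
  have hmom : ∀ k : ℕ, Integrable (fun ω => W ω ^ k) P := by
    intro k
    have h1 : MemLp (id : ℝ → ℝ) (k : ℝ≥0∞) (gaussianReal 0 1) :=
      memLp_id_gaussianReal' _ (by simp)
    have h2 : Integrable (fun x : ℝ => x ^ k) (gaussianReal 0 1) := by
      refine (integrable_norm_iff (by fun_prop)).mp ?_
      simpa using h1.integrable_norm_pow'
    rw [← hW] at h2
    exact h2.comp_measurable hWmeas
  have hr := χ.rIn_pos
  have hχm : Measurable χ := χ.continuous.measurable
  have hi1 : Integrable (fun ω => (s * W ω) ^ m) P := by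
    simp_rw [mul_pow]; exact (hmom m).const_mul _
  have hi2 : Integrable (fun ω => (s * W ω) ^ m * χ (s * W ω)) P := by
    refine hi1.norm.mono' (by fun_prop : Measurable _).aestronglyMeasurable (Eventually.of_forall fun ω => ?_)
    rw [norm_mul, Real.norm_of_nonneg χ.nonneg]
    exact mul_le_of_le_one_right (norm_nonneg _) χ.le_one
  rw [← integral_const_mul, ← integral_const_mul, ← integral_const_mul]
  simp_rw [← mul_pow s]
  rw [← integral_sub hi2 hi1, ← Real.norm_eq_abs]
  refine norm_integral_le_of_norm_le (((hmom 10).const_mul _).const_mul _) (Eventually.of_forall fun ω => ?_)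
  generalize hx : s * W ω = x
  have e1 : s ^ 10 * ((χ.rIn ^ (10 - m))⁻¹ * W ω ^ 10) = x ^ 10 * (χ.rIn ^ (10 - m))⁻¹ := by
    rw [← hx]; ring
  rw [e1]
  have hx10 : 0 ≤ x ^ 10 := Even.pow_nonneg (by decide) x
  have hxm : 0 ≤ x ^ m := hme.pow_nonneg x
  rcases le_or_gt |x| χ.rIn with h | h
  · have : χ x = 1 := χ.one_of_mem_closedBall (by simpa using h)
    rw [this, mul_one, sub_self, norm_zero]
    positivity
  · have h1 : ‖x ^ m * χ x - x ^ m‖ ≤ x ^ m := by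
      rw [Real.norm_eq_abs, abs_le]
      have := χ.nonneg (x := x)
      have := χ.le_one (x := x)
      constructor <;> nlinarith
    refine h1.trans ?_
    rw [← div_eq_mul_inv, le_div_iff₀ (by positivity), ← hme.pow_abs x, ← (by decide : Even 10).pow_abs x]
    calc |x| ^ m * χ.rIn ^ (10 - m) ≤ |x| ^ m * |x| ^ (10 - m) := by gcongr
      _ = |x| ^ 10 := by rw [← pow_add]; congr 1; omega
lemma bump_integrable {Y Cp Cm : ℝ} (hY2 : Y < 2) (hCp : 0 < Cp) (hCm : 0 < Cm)
    {m : ℕ} (hm : 2 ≤ m) (hme : Even m) (χ : ContDiffBump (0 : ℝ)) :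
    Integrable (fun z => (z ^ m * χ z) * kern Y Cp Cm z) := by
  have h1 := (kern_trunc (Y := Y) (Cp := Cp) (Cm := Cm) hY2 hm hme χ.rOut_pos).1
  have hk := kern_measurable Y Cp Cm
  have hχm : Measurable χ := χ.continuous.measurable
  refine h1.mono' (by fun_prop : Measurable _).aestronglyMeasurable (Eventually.of_forall fun z => ?_)
  have hk0 := kern_nonneg (Y := Y) hCp hCm z
  have hz : 0 ≤ z ^ m := hme.pow_nonneg z
  have c0 := χ.nonneg (x := z)
  have c1 := χ.le_one (x := z)
  rw [Real.norm_of_nonneg (by positivity)]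
  refine mul_le_mul_of_nonneg_right ?_ hk0
  by_cases h : |z| ≤ χ.rOut
  · rw [indicator_of_mem (show z ∈ {x : ℝ | |x| ≤ χ.rOut} from h)]
    exact mul_le_of_le_one_right hz c1
  · rw [χ.zero_of_le_dist (by simpa using (not_le.mp h).le), mul_zero]
    exact indicator_nonneg (fun x _ => hme.pow_nonneg x) z

lemma bump_limit
    {Ω : Type*} [MeasurableSpace Ω] (P : Measure Ω) [IsProbabilityMeasure P]
    {Y Cp Cm M σ b : ℝ} {q : ℝ → ℝ} (hY1 : 1 < Y) (hY2 : Y < 2)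
    (hCp : 0 < Cp) (hCm : 0 < Cm)
    (hq_meas : Measurable q) (hq_nonneg : ∀ x, 0 ≤ q x) (hM : ∀ x, q x ≤ M)
    (hq_lim : Tendsto q (𝓝[≠] (0 : ℝ)) (𝓝 1))
    (J : ℝ → Ω → ℝ) (W : Ω → ℝ)
    (hWmeas : Measurable W) (hW : P.map W = gaussianReal 0 1)
    (hJmeas : ∀ h : ℝ, Measurable (J h))
    (hJcf : ∀ h : ℝ, 0 < h → ∀ u : ℝ,
      ∫ ω, Complex.exp (Complex.I * u * J h ω) ∂P = Complex.exp (h * psiJ b Y Cp Cm q u))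
    (hindep : ∀ h : ℝ, 0 < h → IndepFun W (J h) P)
    (ε : ℝ → ℝ) (hε : Tendsto ε (𝓝[>] (0 : ℝ)) (𝓝[>] 0))
    (hτ : Tendsto (fun h => h * ε h ^ (-Y)) (𝓝[>] (0 : ℝ)) (𝓝 0))
    (hδ : Tendsto (fun h => h / ε h ^ 2) (𝓝[>] (0 : ℝ)) (𝓝 0))
    (hδτ : Tendsto (fun h => (h / ε h ^ 2) ^ 5 / (h * ε h ^ (-Y))) (𝓝[>] (0 : ℝ)) (𝓝 0))
    {m : ℕ} (hm : 2 ≤ m) (hm10 : m ≤ 10) (hme : Even m) (χ : ContDiffBump (0 : ℝ)) :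
    Tendsto (fun h => (∫ ω, ((σ * Real.sqrt h * W ω + J h ω) / ε h) ^ m *
          χ ((σ * Real.sqrt h * W ω + J h ω) / ε h) ∂P
        - (σ * Real.sqrt h / ε h) ^ m * ∫ ω, W ω ^ m ∂P) / (h * ε h ^ (-Y))) (𝓝[>] (0 : ℝ))
      (𝓝 (∫ z, (z ^ m * χ z) * kern Y Cp Cm z)) := by
  have hsm : ContDiff ℝ (⊤ : ℕ∞) (fun x : ℝ => x ^ m * χ x) := (contDiff_id.pow m).mul χ.contDiff
  have hcs : HasCompactSupport (fun x : ℝ => x ^ m * χ x) := χ.hasCompactSupport.mul_left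
  have hd : HasDerivAt (fun x : ℝ => x ^ m * χ x) 0 0 := by
    have h1 : HasDerivAt (fun x : ℝ => x ^ m) 0 0 := by
      have := hasDerivAt_pow m (0:ℝ)
      rwa [zero_pow (by omega), mul_zero] at this
    have h2 : HasDerivAt χ (deriv χ 0) 0 :=
      ((χ.contDiff (n := 1)).differentiable (by norm_num) 0).hasDerivAt
    have := h1.mul h2
    rw [zero_mul, zero_pow (by omega), zero_mul, add_zero] at this
    exact this
  have h1 := smooth_limit P (σ := σ) hY1 hY2 hCp hCm hq_meas hq_nonneg hM hq_lim J W hWmeas hW hJmeas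
    hJcf hindep ε hε hτ hδ hsm hcs (by simp only [zero_pow (show m ≠ 0 by omega), zero_mul]) hd
    (bump_integrable hY2 hCp hCm hm hme χ)
  have h2 : Tendsto (fun h => (∫ ω, ((σ * Real.sqrt h / ε h) * W ω) ^ m *
      χ ((σ * Real.sqrt h / ε h) * W ω) ∂P - (σ * Real.sqrt h / ε h) ^ m * ∫ ω, W ω ^ m ∂P)
        / (h * ε h ^ (-Y))) (𝓝[>] (0:ℝ)) (𝓝 0) := by
    set A := (χ.rIn ^ (10 - m))⁻¹ * ∫ ω, W ω ^ 10 ∂P with hA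
    have hz : Tendsto (fun h => σ ^ 10 * A * ((h / ε h ^ 2) ^ 5 / (h * ε h ^ (-Y)))) (𝓝[>] (0:ℝ)) (𝓝 0) := by
      simpa using hδτ.const_mul (σ ^ 10 * A)
    refine squeeze_zero_norm' ?_ hz
    filter_upwards [(tendsto_nhdsWithin_iff.mp hε).2, self_mem_nhdsWithin] with h he hh
    have he : 0 < ε h := he
    have hh : 0 < h := hh
    have hτ0 : 0 < h * ε h ^ (-Y) := by positivity
    rw [norm_div, Real.norm_of_nonneg hτ0.le, ← mul_div_assoc]
    refine div_le_div_of_nonneg_right ?_ hτ0.le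
    have := gauss_bump P W hWmeas hW hm10 hme χ (σ * Real.sqrt h / ε h)
    rw [Real.norm_eq_abs]
    refine this.trans (le_of_eq ?_)
    have e1 : (σ * Real.sqrt h / ε h) ^ 10 = σ ^ 10 * (h / ε h ^ 2) ^ 5 := by
      have : (σ * Real.sqrt h / ε h) ^ 2 = σ ^ 2 * (h / ε h ^ 2) := by
        rw [div_pow, mul_pow, Real.sq_sqrt hh.le]; ring
      calc (σ * Real.sqrt h / ε h) ^ 10 = ((σ * Real.sqrt h / ε h) ^ 2) ^ 5 := by ring
        _ = _ := by rw [this]; ring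
    rw [e1, ← hA]; ring
  have h3 := h1.add h2
  rw [add_zero] at h3
  refine h3.congr fun h => ?_
  rw [← add_div]
  congr 1
  ring

lemma trunc_limit
    {Ω : Type*} [MeasurableSpace Ω] (P : Measure Ω) [IsProbabilityMeasure P]
    {Y Cp Cm M σ b : ℝ} {q : ℝ → ℝ} (hY1 : 1 < Y) (hY2 : Y < 2)
    (hCp : 0 < Cp) (hCm : 0 < Cm)
    (hq_meas : Measurable q) (hq_nonneg : ∀ x, 0 ≤ q x) (hM : ∀ x, q x ≤ M)
    (hq_lim : Tendsto q (𝓝[≠] (0 : ℝ)) (𝓝 1))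
    (J : ℝ → Ω → ℝ) (W : Ω → ℝ)
    (hWmeas : Measurable W) (hW : P.map W = gaussianReal 0 1)
    (hJmeas : ∀ h : ℝ, Measurable (J h))
    (hJcf : ∀ h : ℝ, 0 < h → ∀ u : ℝ,
      ∫ ω, Complex.exp (Complex.I * u * J h ω) ∂P = Complex.exp (h * psiJ b Y Cp Cm q u))
    (hindep : ∀ h : ℝ, 0 < h → IndepFun W (J h) P)
    (ε : ℝ → ℝ) (hε : Tendsto ε (𝓝[>] (0 : ℝ)) (𝓝[>] 0))
    (hτ : Tendsto (fun h => h * ε h ^ (-Y)) (𝓝[>] (0 : ℝ)) (𝓝 0))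
    (hδ : Tendsto (fun h => h / ε h ^ 2) (𝓝[>] (0 : ℝ)) (𝓝 0))
    (hδτ : Tendsto (fun h => (h / ε h ^ 2) ^ 5 / (h * ε h ^ (-Y))) (𝓝[>] (0 : ℝ)) (𝓝 0))
    {m : ℕ} (hm : 2 ≤ m) (hm10 : m ≤ 10) (hme : Even m) {a : ℝ} (ha : 0 < a) :
    Tendsto (fun h => (∫ ω, indicator {x : ℝ | |x| ≤ a} (fun x => x ^ m)
          ((σ * Real.sqrt h * W ω + J h ω) / ε h) ∂P
        - (σ * Real.sqrt h / ε h) ^ m * ∫ ω, W ω ^ m ∂P) / (h * ε h ^ (-Y))) (𝓝[>] (0 : ℝ))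
      (𝓝 ((Cp + Cm) / (m - Y) * a ^ ((m : ℝ) - Y))) := by
  have hm' : (2:ℝ) ≤ m := by exact_mod_cast hm
  have hB := fun χ => bump_limit P (σ := σ) hY1 hY2 hCp hCm hq_meas hq_nonneg hM hq_lim J W hWmeas hW hJmeas
    hJcf hindep ε hε hτ hδ hδτ hm hm10 hme χ
  have hIm : ∀ c : ℝ, Measurable (indicator {x : ℝ | |x| ≤ c} (fun x : ℝ => x ^ m)) := fun c =>
    Measurable.indicator (by fun_prop) (measurableSet_le (by fun_prop) measurable_const)
  -- pointwise comparisons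
  have hup : ∀ (χ : ContDiffBump (0:ℝ)) (x : ℝ), x ^ m * χ x ≤ indicator {x : ℝ | |x| ≤ χ.rOut} (fun x => x ^ m) x := by
    intro χ x
    have hz : 0 ≤ x ^ m := hme.pow_nonneg x
    by_cases h : |x| ≤ χ.rOut
    · rw [indicator_of_mem (show x ∈ {x : ℝ | |x| ≤ χ.rOut} from h)]
      exact mul_le_of_le_one_right hz χ.le_one
    · rw [χ.zero_of_le_dist (by simpa using (not_le.mp h).le), mul_zero]
      exact indicator_nonneg (fun x _ => hme.pow_nonneg x) x
  have hlo : ∀ (χ : ContDiffBump (0:ℝ)) (x : ℝ), indicator {x : ℝ | |x| ≤ χ.rIn} (fun x => x ^ m) x ≤ x ^ m * χ x := by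
    intro χ x
    have hz : 0 ≤ x ^ m := hme.pow_nonneg x
    by_cases h : |x| ≤ χ.rIn
    · rw [indicator_of_mem (show x ∈ {x : ℝ | |x| ≤ χ.rIn} from h),
        χ.one_of_mem_closedBall (by simpa using h), mul_one]
    · rw [indicator_of_notMem (show x ∉ {x : ℝ | |x| ≤ χ.rIn} from h)]
      exact mul_nonneg hz χ.nonneg
  have hbdd : ∀ (c : ℝ) (Z : Ω → ℝ), Measurable Z →
      Integrable (fun ω => indicator {x : ℝ | |x| ≤ c} (fun x => x ^ m) (Z ω)) P := by
    intro c Z hZ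
    refine Integrable.of_bound ((hIm c).comp hZ).aestronglyMeasurable (|c| ^ m) (Eventually.of_forall fun ω => ?_)
    by_cases h : |Z ω| ≤ c
    · rw [indicator_of_mem (show Z ω ∈ {x : ℝ | |x| ≤ c} from h), norm_pow, Real.norm_eq_abs]
      have : |Z ω| ≤ |c| := h.trans (le_abs_self c)
      gcongr
    · rw [indicator_of_notMem (show Z ω ∉ {x : ℝ | |x| ≤ c} from h), norm_zero]
      positivity
  have hbdd2 : ∀ (χ : ContDiffBump (0:ℝ)) (Z : Ω → ℝ), Measurable Z →
      Integrable (fun ω => Z ω ^ m * χ (Z ω)) P := by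
    intro χ Z hZ
    have hχm : Measurable χ := χ.continuous.measurable
    refine (hbdd χ.rOut Z hZ).mono' (by fun_prop : Measurable _).aestronglyMeasurable (Eventually.of_forall fun ω => ?_)
    rw [Real.norm_of_nonneg (mul_nonneg (hme.pow_nonneg _) χ.nonneg)]
    exact hup χ (Z ω)
  have hcont : ContinuousAt (fun c : ℝ => (Cp + Cm) / (m - Y) * c ^ ((m : ℝ) - Y)) a :=
    (Real.continuousAt_rpow_const a _ (Or.inl ha.ne')).const_mul _
  have hXm : ∀ h, Measurable (fun ω => (σ * Real.sqrt h * W ω + J h ω) / ε h) := by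
    intro h; have := hJmeas h; fun_prop
  have hpos : ∀ᶠ h in 𝓝[>] (0:ℝ), 0 < h * ε h ^ (-Y) := by
    filter_upwards [(tendsto_nhdsWithin_iff.mp hε).2, self_mem_nhdsWithin] with h he hh
    have he : 0 < ε h := he
    have hh : 0 < h := hh
    positivity
  refine tendsto_order.mpr ⟨fun y hy => ?_, fun y hy => ?_⟩
  · -- lower bound
    have hev : ∀ᶠ c in 𝓝[<] a, y < (Cp + Cm) / (m - Y) * c ^ ((m : ℝ) - Y) :=
      (hcont.eventually (lt_mem_nhds hy)).filter_mono nhdsWithin_le_nhds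
    have hev2 : ∀ᶠ c in 𝓝[<] a, 0 < c := (lt_mem_nhds ha).filter_mono nhdsWithin_le_nhds
    obtain ⟨c, hc1, hc0, hca⟩ := (hev.and (hev2.and self_mem_nhdsWithin)).exists
    let χ : ContDiffBump (0:ℝ) := ⟨c, a, hc0, hca⟩
    have hkt := kern_trunc (Y := Y) (Cp := Cp) (Cm := Cm) hY2 hm hme hc0
    have hInt0 : y < ∫ z, (z ^ m * χ z) * kern Y Cp Cm z := by
      refine hc1.trans_le ?_
      rw [← hkt.2]
      exact integral_mono hkt.1 (bump_integrable hY2 hCp hCm hm hme χ)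
        fun z => mul_le_mul_of_nonneg_right (hlo χ z) (kern_nonneg hCp hCm z)
    filter_upwards [(hB χ).eventually (lt_mem_nhds hInt0), hpos] with h hh hτ0
    refine hh.trans_le (div_le_div_of_nonneg_right (sub_le_sub_right ?_ _) hτ0.le)
    exact integral_mono (hbdd2 χ _ (hXm h)) (hbdd a _ (hXm h)) fun ω => hup χ _
  · have hev : ∀ᶠ c in 𝓝[>] a, (Cp + Cm) / (m - Y) * c ^ ((m : ℝ) - Y) < y :=
      (hcont.eventually (gt_mem_nhds hy)).filter_mono nhdsWithin_le_nhds
    obtain ⟨c, hc1, hca⟩ := (hev.and self_mem_nhdsWithin).exists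
    have hca : a < c := hca
    let χ : ContDiffBump (0:ℝ) := ⟨a, c, ha, hca⟩
    have hkt := kern_trunc (Y := Y) (Cp := Cp) (Cm := Cm) hY2 hm hme (ha.trans hca)
    have hInt0 : ∫ z, (z ^ m * χ z) * kern Y Cp Cm z < y := by
      refine lt_of_le_of_lt ?_ hc1
      rw [← hkt.2]
      exact integral_mono (bump_integrable hY2 hCp hCm hm hme χ) hkt.1
        fun z => mul_le_mul_of_nonneg_right (hup χ z) (kern_nonneg hCp hCm z)
    filter_upwards [(hB χ).eventually (gt_mem_nhds hInt0), hpos] with h hh hτ0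
    refine lt_of_le_of_lt (div_le_div_of_nonneg_right (sub_le_sub_right ?_ _) hτ0.le) hh
    exact integral_mono (hbdd a _ (hXm h)) (hbdd2 χ _ (hXm h)) fun ω => hlo χ _
lemma gauss_two : ∫ x, x ^ 2 ∂(gaussianReal 0 1) = 1 := by
  have h1 := variance_of_integral_eq_zero (μ := gaussianReal 0 1) (X := id) aemeasurable_id
    (by simp)
  rw [variance_id_gaussianReal] at h1
  simpa using h1.symm

lemma gauss_four : ∫ x, x ^ 4 ∂(gaussianReal 0 1) = 3 := by
  rw [integral_gaussianReal_eq_integral_smul (by norm_num)]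
  have h0 : ∀ x : ℝ, gaussianPDFReal 0 1 x • x ^ 4
      = (Real.sqrt (2 * π))⁻¹ * (|x| ^ (4:ℝ) * Real.exp (-(1/2) * |x| ^ (2:ℝ))) := by
    intro x
    rw [gaussianPDFReal]
    have e1 : |x| ^ (4:ℝ) = x ^ 4 := by
      rw [show (4:ℝ) = ((4:ℕ):ℝ) by norm_num, Real.rpow_natCast]
      exact (by decide : Even 4).pow_abs x
    have e2 : |x| ^ (2:ℝ) = x ^ 2 := by
      rw [show (2:ℝ) = ((2:ℕ):ℝ) by norm_num, Real.rpow_natCast, sq_abs]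
    rw [e1, e2]
    simp only [NNReal.coe_one, mul_one, sub_zero, smul_eq_mul]
    rw [show -x ^ 2 / 2 = -(1/2) * x ^ 2 by ring]
    ring
  simp_rw [h0]
  rw [integral_const_mul, integral_comp_abs (f := fun x => x ^ (4:ℝ) * Real.exp (-(1/2) * x ^ (2:ℝ))),
    integral_rpow_mul_exp_neg_mul_rpow (by norm_num) (by norm_num) (by norm_num)]
  have hG : Real.Gamma ((4 + 1) / 2) = 3 / 4 * Real.sqrt π := by
    rw [show ((4:ℝ) + 1) / 2 = (1/2 + 1) + 1 by norm_num, Real.Gamma_add_one (by norm_num),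
      Real.Gamma_add_one (by norm_num), Real.Gamma_one_half_eq]
    ring
  have hp : (1 / 2 : ℝ) ^ (-(4 + 1) / 2 : ℝ) = 4 * Real.sqrt 2 := by
    rw [one_div, Real.inv_rpow (by norm_num), ← Real.rpow_neg (by norm_num),
      show (-(-((4:ℝ) + 1) / 2)) = (2:ℕ) + 1 / 2 by norm_num, Real.rpow_add (by norm_num),
      Real.rpow_natCast, ← Real.sqrt_eq_rpow]
    norm_num
  rw [hG, hp, Real.sqrt_mul (by norm_num)]
  have : Real.sqrt 2 ≠ 0 := by positivity
  have : Real.sqrt π ≠ 0 := by positivity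
  field_simp

lemma asymp {Y : ℝ} (hY1 : 1 < Y) (hY2 : Y < 2) (ε : ℝ → ℝ) (hεpos : ∀ h : ℝ, 0 < h → 0 < ε h)
    (hε_lo : Tendsto (fun h => ε h * h ^ (-(4 : ℝ) / (8 + Y))) (𝓝[>] (0 : ℝ)) atTop)
    (hε_hi : Tendsto (fun h => ε h * h ^ (-(1 : ℝ) / (4 - Y))) (𝓝[>] (0 : ℝ)) (𝓝 0)) :
    Tendsto ε (𝓝[>] (0 : ℝ)) (𝓝[>] 0) ∧
    Tendsto (fun h => h * ε h ^ (-Y)) (𝓝[>] (0 : ℝ)) (𝓝 0) ∧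
    Tendsto (fun h => h / ε h ^ 2) (𝓝[>] (0 : ℝ)) (𝓝 0) ∧
    Tendsto (fun h => (h / ε h ^ 2) ^ 5 / (h * ε h ^ (-Y))) (𝓝[>] (0 : ℝ)) (𝓝 0) := by
  have hpos : ∀ᶠ h in 𝓝[>] (0:ℝ), 0 < h := self_mem_nhdsWithin
  have hε0 : Tendsto ε (𝓝[>] (0 : ℝ)) (𝓝 0) := by
    have h1 : Tendsto (fun h : ℝ => h ^ ((1:ℝ) / (4 - Y))) (𝓝[>] (0:ℝ)) (𝓝 0) := by
      have hp : 0 < (1:ℝ) / (4 - Y) := by apply div_pos <;> linarith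
      have := (Real.continuousAt_rpow_const 0 ((1:ℝ) / (4 - Y)) (Or.inr hp.le)).tendsto
      rw [Real.zero_rpow hp.ne'] at this
      exact this.mono_left nhdsWithin_le_nhds
    have h2 := hε_hi.mul h1
    rw [zero_mul] at h2
    refine h2.congr' ?_
    filter_upwards [hpos] with h hh
    rw [mul_assoc, ← Real.rpow_add hh, neg_div, neg_add_cancel, Real.rpow_zero, mul_one]
  have hεw : Tendsto ε (𝓝[>] (0 : ℝ)) (𝓝[>] 0) :=
    tendsto_nhdsWithin_iff.mpr ⟨hε0, by filter_upwards [hpos] with h hh using hεpos h hh⟩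
  have hle : ∀ᶠ h in 𝓝[>] (0:ℝ), h ≤ ε h ^ ((8 + Y) / 4) := by
    filter_upwards [hpos, hε_lo.eventually_ge_atTop 1] with h hh h1
    have he := hεpos h hh
    have h2 : h ^ ((4:ℝ) / (8 + Y)) ≤ ε h := by
      have h3 := mul_le_mul_of_nonneg_right h1 (Real.rpow_nonneg hh.le ((4:ℝ) / (8 + Y)))
      rwa [mul_assoc, ← Real.rpow_add hh, neg_div, neg_add_cancel, Real.rpow_zero, mul_one, one_mul] at h3
    have h4 := Real.rpow_le_rpow (Real.rpow_nonneg hh.le _) h2 (show 0 ≤ (8 + Y) / 4 by linarith)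
    rwa [← Real.rpow_mul hh.le, show (4:ℝ) / (8 + Y) * ((8 + Y) / 4) = 1 by
      have : (8 + Y) ≠ 0 := by linarith
      field_simp, Real.rpow_one] at h4
  have hpow : ∀ r : ℝ, 0 < r → Tendsto (fun h => ε h ^ r) (𝓝[>] (0:ℝ)) (𝓝 0) := by
    intro r hr
    have := (Real.continuousAt_rpow_const 0 r (Or.inr hr.le)).tendsto
    rw [Real.zero_rpow hr.ne'] at this
    exact this.comp hε0
  refine ⟨hεw, ?_, ?_, ?_⟩
  · refine squeeze_zero_norm' ?_ (hpow ((8 + Y) / 4 + -Y) (by linarith))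
    filter_upwards [hpos, hle] with h hh h1
    have he := hεpos h hh
    rw [Real.norm_of_nonneg (by positivity), Real.rpow_add he]
    gcongr
  · refine squeeze_zero_norm' ?_ (hpow ((8 + Y) / 4 - (2:ℕ)) (by push_cast; linarith))
    filter_upwards [hpos, hle] with h hh h1
    have he := hεpos h hh
    rw [Real.norm_of_nonneg (by positivity), Real.rpow_sub he, Real.rpow_natCast]
    gcongr
  · refine squeeze_zero_norm' ?_ (hpow ((8 + Y) / 4 * (4:ℕ) + (Y - (10:ℕ))) (by push_cast; linarith))
    filter_upwards [hpos, hle] with h hh h1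
    have he := hεpos h hh
    rw [Real.norm_of_nonneg (by positivity), Real.rpow_add he, Real.rpow_mul he.le, Real.rpow_natCast,
      Real.rpow_sub he, Real.rpow_natCast]
    have e1 : (h / ε h ^ 2) ^ 5 / (h * ε h ^ (-Y)) = h ^ 4 * (ε h ^ Y / ε h ^ 10) := by
      rw [Real.rpow_neg he.le]
      have := Real.rpow_pos_of_pos he Y
      field_simp
    rw [e1]
    gcongr
/-- asymptotics of the covariance of truncated squared increments at two
truncation levels `ε` and `ζε`:
`Cov(X_h² 1_{|X_h|≤ε}, X_h² 1_{|X_h|≤ζε}) = 2σ⁴h² + ((C₊+C₋)/(4−Y)) h ε^{4−Y} + o(h ε^{4−Y})`. -/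
theorem covariance_truncated_square
    {Ω : Type*} [MeasurableSpace Ω] (P : Measure Ω) [IsProbabilityMeasure P]
    (Y Cp Cm σ b : ℝ) (q : ℝ → ℝ)
    (hY1 : 1 < Y) (hY2 : Y < 2)
    (hCp : 0 < Cp) (hCm : 0 < Cm) (hσ : 0 < σ)
    (hq_meas : Measurable q) (hq_nonneg : ∀ x, 0 ≤ q x)
    (hq_bdd : ∃ M : ℝ, ∀ x, q x ≤ M)
    (hq_lim : Tendsto q (𝓝[≠] (0 : ℝ)) (𝓝 1))
    (hq_taylor : ∃ αp αm : ℝ, αp ≠ 0 ∧ αm ≠ 0 ∧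
      IntegrableOn (fun x => |q x - 1 - αp * x| * x ^ (-Y - 1)) (Set.Ioc (0 : ℝ) 1) ∧
      IntegrableOn (fun x => |q x - 1 - αm * x| * |x| ^ (-Y - 1)) (Set.Ico (-1 : ℝ) 0))
    (hq_log : ∃ K M : ℝ, ∀ x : ℝ, M ≤ |x| → |Real.log (q x)| ≤ K * |x|)
    (hq_inf : ∀ ε : ℝ, 0 < ε → ∃ c : ℝ, 0 < c ∧ ∀ x : ℝ, x ≠ 0 → |x| < ε → c ≤ q x)
    (hq_sq : IntegrableOn (fun x => q x ^ 2 * |x| ^ (-1 - Y)) {x : ℝ | 1 < |x|})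
    -- the jump part `J` and the Brownian part `W`
    (J : ℝ → Ω → ℝ) (W : Ω → ℝ)
    (hWmeas : Measurable W) (hW : P.map W = gaussianReal 0 1)
    (hJmeas : ∀ h : ℝ, Measurable (J h))
    (hJcf : ∀ h : ℝ, 0 < h → ∀ u : ℝ,
      ∫ ω, Complex.exp (Complex.I * u * J h ω) ∂P = Complex.exp (h * psiJ b Y Cp Cm q u))
    (hindep : ∀ h : ℝ, 0 < h → IndepFun W (J h) P)
    (hY85 : Y < 8 / 5) (ζ : ℝ) (hζ : 1 < ζ)
    -- the threshold `ε = ε(h)`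
    (ε : ℝ → ℝ) (hεpos : ∀ h : ℝ, 0 < h → 0 < ε h)
    (hε_lo : Tendsto (fun h => ε h * h ^ (-(4 : ℝ) / (8 + Y))) (𝓝[>] (0 : ℝ)) atTop)
    (hε_hi : Tendsto (fun h => ε h * h ^ (-(1 : ℝ) / (4 - Y))) (𝓝[>] (0 : ℝ)) (𝓝 0)) :
    (fun h : ℝ =>
        ((∫ ω, (Set.indicator {x : ℝ | |x| ≤ ε h} (fun x => x ^ 2)
              (σ * Real.sqrt h * W ω + J h ω)) *
            (Set.indicator {x : ℝ | |x| ≤ ζ * ε h} (fun x => x ^ 2)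
              (σ * Real.sqrt h * W ω + J h ω)) ∂P)
          - (∫ ω, Set.indicator {x : ℝ | |x| ≤ ε h} (fun x => x ^ 2)
              (σ * Real.sqrt h * W ω + J h ω) ∂P) *
            (∫ ω, Set.indicator {x : ℝ | |x| ≤ ζ * ε h} (fun x => x ^ 2)
              (σ * Real.sqrt h * W ω + J h ω) ∂P))
        - (2 * σ ^ 4 * h ^ 2 + (Cp + Cm) / (4 - Y) * h * ε h ^ (4 - Y)))
      =o[𝓝[>] (0 : ℝ)] (fun h => h * ε h ^ (4 - Y)) := by
  obtain ⟨M, hM⟩ := hq_bdd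
  obtain ⟨hε, hτ, hδ, hδτ⟩ := asymp hY1 hY2 ε hεpos hε_lo hε_hi
  have hpos : ∀ᶠ h in 𝓝[>] (0:ℝ), 0 < h := self_mem_nhdsWithin
  have L4 := trunc_limit P (σ := σ) hY1 hY2 hCp hCm hq_meas hq_nonneg hM hq_lim J W hWmeas hW
    hJmeas hJcf hindep ε hε hτ hδ hδτ (m := 4) (a := 1) (by norm_num) (by norm_num) (by decide)
    one_pos
  have L2 := trunc_limit P (σ := σ) hY1 hY2 hCp hCm hq_meas hq_nonneg hM hq_lim J W hWmeas hW
    hJmeas hJcf hindep ε hε hτ hδ hδτ (m := 2) (a := 1) (by norm_num) (by norm_num) (by decide)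
    one_pos
  have L2z := trunc_limit P (σ := σ) hY1 hY2 hCp hCm hq_meas hq_nonneg hM hq_lim J W hWmeas hW
    hJmeas hJcf hindep ε hε hτ hδ hδτ (m := 2) (a := ζ) (by norm_num) (by norm_num) (by decide)
    (by linarith)
  have w2 : ∫ ω, W ω ^ 2 ∂P = 1 := by
    rw [← gauss_two, ← hW, integral_map hWmeas.aemeasurable (by fun_prop)]
  have w4 : ∫ ω, W ω ^ 4 ∂P = 3 := by
    rw [← gauss_four, ← hW, integral_map hWmeas.aemeasurable (by fun_prop)]
  rw [w4] at L4
  rw [w2] at L2 L2z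
  have ind2 : ∀ (e a x : ℝ), 0 < e → indicator {x : ℝ | |x| ≤ a * e} (fun x => x ^ 2) x
      = e ^ 2 * indicator {x : ℝ | |x| ≤ a} (fun x => x ^ 2) (x / e) := by
    intro e a x he
    have hiff : |x / e| ≤ a ↔ |x| ≤ a * e := by rw [abs_div, abs_of_pos he, div_le_iff₀ he]
    by_cases hx : |x| ≤ a * e
    · rw [indicator_of_mem (show x ∈ {x : ℝ | |x| ≤ a * e} from hx),
        indicator_of_mem (show x / e ∈ {x : ℝ | |x| ≤ a} from hiff.mpr hx)]
      field_simp
    · rw [indicator_of_notMem (show x ∉ {x : ℝ | |x| ≤ a * e} from hx),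
        indicator_of_notMem (show x / e ∉ {x : ℝ | |x| ≤ a} from fun h => hx (hiff.mp h)), mul_zero]
  have ind4 : ∀ z : ℝ, indicator {x : ℝ | |x| ≤ 1} (fun x => x ^ 2) z
      * indicator {x : ℝ | |x| ≤ ζ} (fun x => x ^ 2) z
      = indicator {x : ℝ | |x| ≤ 1} (fun x => x ^ 4) z := by
    intro z
    by_cases hz : |z| ≤ 1
    · rw [indicator_of_mem (show z ∈ {x : ℝ | |x| ≤ 1} from hz),
        indicator_of_mem (show z ∈ {x : ℝ | |x| ≤ 1} from hz),
        indicator_of_mem (show z ∈ {x : ℝ | |x| ≤ ζ} from hz.trans hζ.le)]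
      ring
    · rw [indicator_of_notMem (show z ∉ {x : ℝ | |x| ≤ 1} from hz),
        indicator_of_notMem (show z ∉ {x : ℝ | |x| ≤ 1} from hz), zero_mul]
  rw [isLittleO_iff_tendsto' (by
    filter_upwards [hpos] with h hh h0
    have he := hεpos h hh
    exact absurd h0 (by positivity))]
  have key := ((L4.sub_const ((Cp + Cm) / (4 - Y))).sub
    ((hδ.const_mul (σ ^ 2)).mul (L2.add L2z))).sub (hτ.mul (L2.mul L2z))
  simp only [Real.one_rpow, mul_one, Nat.cast_ofNat, sub_self, mul_zero, zero_mul] at key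
  refine key.congr' ?_
  filter_upwards [hpos] with h hh
  have he := hεpos h hh
  have i1 : ∀ x : ℝ, indicator {x : ℝ | |x| ≤ ε h} (fun x => x ^ 2) x
      = ε h ^ 2 * indicator {x : ℝ | |x| ≤ 1} (fun x => x ^ 2) (x / ε h) := by
    intro x
    have := ind2 (ε h) 1 x he
    rwa [one_mul] at this
  have i3 : ∀ x : ℝ, indicator {x : ℝ | |x| ≤ ε h} (fun x => x ^ 2) x *
      indicator {x : ℝ | |x| ≤ ζ * ε h} (fun x => x ^ 2) x
      = ε h ^ 4 * indicator {x : ℝ | |x| ≤ 1} (fun x => x ^ 4) (x / ε h) := by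
    intro x
    rw [i1, ind2 _ _ _ he, ← ind4]
    ring
  simp_rw [i3, i1, fun x => ind2 (ε h) ζ x he]
  simp only [integral_const_mul]
  generalize (∫ ω, indicator {x : ℝ | |x| ≤ 1} (fun x => x ^ 4)
    ((σ * Real.sqrt h * W ω + J h ω) / ε h) ∂P) = A
  generalize (∫ ω, indicator {x : ℝ | |x| ≤ 1} (fun x => x ^ 2)
    ((σ * Real.sqrt h * W ω + J h ω) / ε h) ∂P) = B
  generalize (∫ ω, indicator {x : ℝ | |x| ≤ ζ} (fun x => x ^ 2)
    ((σ * Real.sqrt h * W ω + J h ω) / ε h) ∂P) = B'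
  have hs2 : (σ * Real.sqrt h / ε h) ^ 2 = σ ^ 2 * h / ε h ^ 2 := by
    rw [div_pow, mul_pow, Real.sq_sqrt hh.le]
  have hs4 : (σ * Real.sqrt h / ε h) ^ 4 = (σ ^ 2 * h / ε h ^ 2) ^ 2 := by
    rw [← hs2]; ring
  have hp : ε h ^ (4 - Y) = ε h ^ 4 * ε h ^ (-Y) := by
    rw [sub_eq_add_neg, Real.rpow_add he]
    congr 1
    exact_mod_cast Real.rpow_natCast (ε h) 4
  rw [hs4, hs2, hp]
  have hT : 0 < ε h ^ (-Y) := Real.rpow_pos_of_pos he _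
  generalize ε h ^ (-Y) = T at hT
  have h4Y : (4 - Y) ≠ 0 := by linarith
  field_simp
  ring

end
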